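/- arXiv:2604.14681 — 2 statements merged into one kernel-verified Lean document; each statement's English description precedes it below -/
import Mathlib

section
/- (Finite-volume expansion of the two-point Janossy density, equation (2.15).) Let d ≥ 1, let Λ ⊆ ℝ^d be a bounded measurable set, let ρ = (ρ^{(n)})_{n≥0} be a configuration functional over E = ℝ^d with ρ^{(0)} = 1 and each ρ^{(n)} measurable, and let x₁, x₂ ∈ ℝ^d with ρ^{(2)}(x₁,x₂) ≠ 0. Let F ∈ A₀ be the unique configuration functional satisfying D_{x₁,x₂} ρ = ρ^{(2)}(x₁,x₂) · exp∗ F. Suppose there are constants C > 0 and 0 < c < 1/2 such that for every k ≥ 0 and every y ∈ ℝ^d, ∫_{Λ^k} |F^{(k+1)}(y, y₁,…,y_k)| dy₁…dy_k ≤ k! · C · c^k. Then the series Σ_{k≥1} ((−1)^k/k!) ∫_{Λ^k} F^{(k)}(y₁,…,y_k) dy and Σ_{k≥0} ((−1)^k/k!) ∫_{Λ^k} ρ^{(2+k)}(x₁,x₂,y₁,…,y_k) dy converge absolutely, and Σ_{k=0}^∞ ((−1)^k/k!) ∫_{Λ^k} ρ^{(2+k)}(x₁,x₂,y₁,…,y_k)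 dy = ρ^{(2)}(x₁,x₂) · exp( Σ_{k=1}^∞ ((−1)^k/k!) ∫_{Λ^k} F^{(k)}(y₁,…,y_k) dy ). -/
open MeasureTheory Finset

abbrev CF (E : Type) : Type := (n : ℕ) → (Fin n → E) → ℝ

namespace CF

variable {E : Type}

/-- Symmetry of a configuration functional under permutations of the arguments. -/
def IsSymm (F : CF E) : Prop :=
  ∀ (n : ℕ) (σ : Equiv.Perm (Fin n)) (x : Fin n → E), F n (x ∘ σ) = F n x

/-- The subtuple of `x` with indices in `I`, listed in increasing order. -/
noncomputable def sub {n : ℕ} (x : Fin n → E) (I : Finset (Fin n)) : Fin I.card → E :=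
  fun i => x (I.orderIsoOfFin rfl i).1

/-- The convolution `Ψ ∗ Φ`. -/
noncomputable def conv (Ψ Φ : CF E) : CF E :=
  fun n x => ∑ I : Finset (Fin n), Ψ I.card (sub x I) * Φ Iᶜ.card (sub x Iᶜ)

/-- The unit `𝟙`. -/
def unit : CF E := fun n _ => if n = 0 then 1 else 0

/-- Star-powers `Φ^{∗m}`. -/
noncomputable def starPow (Φ : CF E) : ℕ → CF E
  | 0 => unit
  | m + 1 => conv Φ (starPow Φ m)

/-- The star-exponential `exp∗ Φ = 𝟙 + Σ_{m≥1} Φ^{∗m}/m!`; on `A₀` the sum in the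
`n`-th component is finite since `(Φ^{∗m})^{(n)} = 0` for `m > n`. -/
noncomputable def starExp (Φ : CF E) : CF E :=
  fun n x => ∑ m ∈ Finset.range (n + 1), ((m.factorial : ℝ))⁻¹ * starPow Φ m n x

/-- The derivative `D_x`. -/
noncomputable def D (x : E) (Φ : CF E) : CF E := fun n y => Φ (n + 1) (Fin.cons x y)

/-- The second derivative `D_{x₁,x₂} = D_{x₁} ∘ D_{x₂}`. -/
noncomputable def D2 (x₁ x₂ : E) (Φ : CF E) : CF E := D x₁ (D x₂ Φ)

end CF

/-- Euclidean space `ℝ^d`. -/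
abbrev Euc (d : ℕ) : Type := EuclideanSpace ℝ (Fin d)

/-- The product measure on `Λ^n ⊆ (ℝ^d)^n` (Lebesgue measure restricted to `Λ`
in each coordinate). -/
noncomputable def piRestrict (d : ℕ) (Λ : Set (Euc d)) (n : ℕ) :
    MeasureTheory.Measure (Fin n → Euc d) :=
  MeasureTheory.Measure.pi fun _ => MeasureTheory.volume.restrict Λ

/-- Lebesgue measure on `(ℝ^d)^n`. -/
noncomputable def piVol (d : ℕ) (n : ℕ) : MeasureTheory.Measure (Fin n → Euc d) :=
  MeasureTheory.Measure.pi fun _ => MeasureTheory.volume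

namespace CF
variable {E : Type}

theorem eval_cast (F : CF E) {k n : ℕ} (h : k = n) (y : Fin k → E) (x : Fin n → E)
    (hxy : ∀ i, y i = x (Fin.cast h i)) : F k y = F n x := by
  subst h
  congr 1
  funext i
  exact hxy i

theorem eval_zero (F : CF E) (hF0 : F 0 = 0) {k : ℕ} (h : k = 0) (y : Fin k → E) : F k y = 0 := by
  subst h
  rw [hF0]; rfl

theorem sub_univ (F : CF E) {n : ℕ} (x : Fin n → E) :
    F (Finset.univ : Finset (Fin n)).card (sub x Finset.univ) = F n x := by
  refine eval_cast F (by simp) _ _ fun i => ?_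
  unfold sub
  have h := Finset.orderEmbOfFin_unique (s := (Finset.univ : Finset (Fin n))) (k := (Finset.univ : Finset (Fin n)).card) rfl
    (f := Fin.cast (by simp)) (by simp) (Fin.cast_strictMono (by simp))
  rw [Finset.coe_orderIsoOfFin_apply, ← h]

theorem starPow_one (F : CF E) (n : ℕ) : starPow F 1 n = F n := by
  funext x
  simp only [starPow, conv]
  rw [Finset.sum_eq_single Finset.univ]
  · rw [sub_univ F x]
    simp [unit]
  · intro I _ hI
    have : Iᶜ.card ≠ 0 := by
      simpa [Finset.card_eq_zero, Finset.compl_eq_empty_iff] using hI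
    simp [unit, this]
  · simp

theorem starPow_eq_zero (F : CF E) (hF0 : F 0 = 0) (m : ℕ) : ∀ n, n < m → starPow F m n = 0 := by
  induction m with
  | zero => intro n hn; omega
  | succ m ih =>
    intro n hn
    funext x
    simp only [starPow, conv]
    refine Finset.sum_eq_zero fun I _ => ?_
    by_cases hI : I.card = 0
    · rw [eval_zero F hF0 hI, zero_mul]
    · have h1 : Iᶜ.card = n - I.card := by simp [Finset.card_compl]
      have h2 : I.card ≤ n := by simpa using Finset.card_le_univ I
      rw [ih _ (by omega)]
      simp

variable [MeasurableSpace E]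

theorem measurable_sub {n : ℕ} (I : Finset (Fin n)) : Measurable (fun x : Fin n → E => sub x I) := by
  unfold sub
  exact measurable_pi_lambda _ fun i => measurable_pi_apply _

theorem measurable_conv (Ψ Φ : CF E) (n : ℕ) (h1 : ∀ k ≤ n, Measurable (Ψ k))
    (h2 : ∀ k ≤ n, Measurable (Φ k)) : Measurable (conv Ψ Φ n) := by
  unfold conv
  refine Finset.measurable_sum _ fun I _ => ?_
  have h3 : I.card ≤ n := by simpa using Finset.card_le_univ I
  have h4 : Iᶜ.card ≤ n := by simpa using Finset.card_le_univ Iᶜ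
  exact ((h1 _ h3).comp (measurable_sub I)).mul ((h2 _ h4).comp (measurable_sub Iᶜ))

theorem measurable_starPow (F : CF E) (N : ℕ) (h : ∀ k < N, Measurable (F k)) (m : ℕ) :
    ∀ k < N, Measurable (starPow F m k) := by
  induction m with
  | zero => intro k _; exact measurable_const
  | succ m ih =>
    intro k hk
    exact measurable_conv _ _ _ (fun j hj => h j (by omega)) (fun j hj => ih j (by omega))

theorem measurable_starPow_top (F : CF E) (hF0 : F 0 = 0) (n : ℕ) (h : ∀ k < n, Measurable (F k))
    (m : ℕ) : Measurable (starPow F (m + 2) n) := by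
  change Measurable (conv F (starPow F (m + 1)) n)
  unfold conv
  refine Finset.measurable_sum _ fun I _ => ?_
  have h1 : Iᶜ.card = n - I.card := by simp [Finset.card_compl]
  have h2 : I.card ≤ n := by simpa using Finset.card_le_univ I
  by_cases hI : I.card = 0
  · have : (fun x : Fin n → E => F I.card (sub x I) * starPow F (m + 1) Iᶜ.card (sub x Iᶜ)) = fun _ => 0 := by
      funext x
      rw [eval_zero F hF0 hI, zero_mul]
    rw [this]; exact measurable_const
  by_cases hI' : Iᶜ.card = 0
  · have : (fun x : Fin n → E => F I.card (sub x I) * starPow F (m + 1) Iᶜ.card (sub x Iᶜ)) = fun _ => 0 := by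
      funext x
      rw [starPow_eq_zero F hF0 (m+1) _ (by omega)]; simp
    rw [this]; exact measurable_const
  exact ((h _ (by omega)).comp (measurable_sub I)).mul
    ((measurable_starPow F n h _ _ (by omega)).comp (measurable_sub Iᶜ))

theorem measurable_of_starExp (F : CF E) (hF0 : F 0 = 0) (h : ∀ n, Measurable (starExp F n)) (n : ℕ) :
    Measurable (F n) := by
  induction n using Nat.strong_induction_on with
  | _ n ih =>
    rcases n with _ | n
    · rw [hF0]; exact measurable_const
    have key : F (n + 1) = fun x => starExp F (n + 1) x -
        (∑ m ∈ Finset.range n, (((m + 2).factorial : ℝ))⁻¹ * starPow F (m + 2) (n + 1) x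
          + starPow F 0 (n + 1) x) := by
      funext x
      unfold starExp
      rw [Finset.sum_range_succ', Finset.sum_range_succ']
      simp [starPow_one]
    rw [key]
    refine (h _).sub (Measurable.add ?_ measurable_const)
    exact Finset.measurable_sum _ fun m _ => (measurable_starPow_top F hF0 _ ih m).const_mul _

theorem mp_sub (μ : Measure E) [SigmaFinite μ] {n : ℕ} (I : Finset (Fin n)) :
    MeasurePreserving (fun x : Fin n → E => (sub x I, sub x Iᶜ)) (Measure.pi fun _ => μ)
      ((Measure.pi fun _ => μ).prod (Measure.pi fun _ => μ)) := by
  have h1 := measurePreserving_arrowCongr' (fun _ : Fin n => μ) (fun _ => μ)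
    (finSumEquivOfFinset (s := I) rfl rfl).symm (MeasurableEquiv.refl E)
    (fun _ => MeasurePreserving.id μ)
  have h2 := measurePreserving_sumPiEquivProdPi
    (fun _ : Fin I.card ⊕ Fin Iᶜ.card => μ)
  exact h2.comp h1

theorem integrable_conv (μ : Measure E) [SigmaFinite μ] (Ψ Φ : CF E)
    (h1 : ∀ k, Integrable (Ψ k) (Measure.pi fun _ => μ))
    (h2 : ∀ k, Integrable (Φ k) (Measure.pi fun _ => μ)) (n : ℕ) :
    Integrable (conv Ψ Φ n) (Measure.pi fun _ => μ) := by
  unfold conv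
  refine integrable_finsetSum _ fun I _ => ?_
  exact (mp_sub μ I).integrable_comp_of_integrable ((h1 I.card).mul_prod (h2 Iᶜ.card))

theorem integral_conv (μ : Measure E) [SigmaFinite μ] (Ψ Φ : CF E)
    (h1 : ∀ k, Integrable (Ψ k) (Measure.pi fun _ => μ))
    (h2 : ∀ k, Integrable (Φ k) (Measure.pi fun _ => μ)) (n : ℕ) :
    ∫ x, conv Ψ Φ n x ∂(Measure.pi fun _ => μ) = ∑ k ∈ Finset.range (n + 1), (n.choose k : ℝ) *
      ((∫ x, Ψ k x ∂(Measure.pi fun _ => μ)) * ∫ x, Φ (n - k) x ∂(Measure.pi fun _ => μ)) := by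
  unfold conv
  rw [integral_finsetSum]
  · have : ∀ I : Finset (Fin n),
      ∫ x, Ψ I.card (sub x I) * Φ Iᶜ.card (sub x Iᶜ) ∂(Measure.pi fun _ => μ) =
        (fun k => (∫ x, Ψ k x ∂(Measure.pi fun _ => μ)) * ∫ x, Φ (n - k) x ∂(Measure.pi fun _ => μ)) I.card := by
      intro I
      have h := (mp_sub μ I).map_eq
      have hint := (h1 I.card).mul_prod (h2 Iᶜ.card)
      have e := integral_map (mp_sub μ I).measurable.aemeasurable
        (f := fun z => Ψ I.card z.1 * Φ Iᶜ.card z.2) (by rw [h]; exact hint.aestronglyMeasurable)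
      rw [h, integral_prod_mul] at e
      rw [← e]
      have hc : Iᶜ.card = n - I.card := by simp [Finset.card_compl]
      simp only
      rw [hc]
    simp_rw [this]
    rw [← Finset.powerset_univ, Finset.sum_powerset_apply_card (fun k => (∫ x, Ψ k x ∂(Measure.pi fun _ => μ)) * ∫ x, Φ (n - k) x ∂(Measure.pi fun _ => μ))]
    simp
  · intro I _
    exact (mp_sub μ I).integrable_comp_of_integrable ((h1 I.card).mul_prod (h2 Iᶜ.card))

/-- coefficient -/
noncomputable def coef (μ : Measure E) (Φ : CF E) (n : ℕ) : ℝ :=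
  (-1 : ℝ) ^ n / n.factorial * ∫ x, Φ n x ∂(Measure.pi fun _ => μ)

theorem coef_conv (μ : Measure E) [SigmaFinite μ] (Ψ Φ : CF E)
    (h1 : ∀ k, Integrable (Ψ k) (Measure.pi fun _ => μ))
    (h2 : ∀ k, Integrable (Φ k) (Measure.pi fun _ => μ)) (n : ℕ) :
    coef μ (conv Ψ Φ) n = ∑ kl ∈ Finset.HasAntidiagonal.antidiagonal n, coef μ Ψ kl.1 * coef μ Φ kl.2 := by
  rw [Finset.Nat.sum_antidiagonal_eq_sum_range_succ (fun k l => coef μ Ψ k * coef μ Φ l)]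
  unfold coef
  rw [integral_conv μ Ψ Φ h1 h2, Finset.mul_sum]
  refine Finset.sum_congr rfl fun k hk => ?_
  have hk : k ≤ n := by simpa [Nat.lt_succ_iff] using hk
  rw [Nat.cast_choose ℝ hk]
  have e : (-1 : ℝ) ^ n = (-1) ^ k * (-1) ^ (n - k) := by rw [← pow_add]; congr 1; omega
  rw [e]
  have := Nat.factorial_ne_zero n
  field_simp

theorem integrable_starPow (μ : Measure E) [IsFiniteMeasure μ] (F : CF E)
    (h1 : ∀ k, Integrable (F k) (Measure.pi fun _ => μ)) (m : ℕ) :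
    ∀ n, Integrable (starPow F m n) (Measure.pi fun _ => μ) := by
  induction m with
  | zero =>
    intro n
    rcases n with _ | n
    · refine (integrable_const (1:ℝ)).congr ?_
      exact Filter.Eventually.of_forall fun x => by simp [starPow, unit]
    · refine (integrable_const (0:ℝ)).congr ?_
      exact Filter.Eventually.of_forall fun x => by simp [starPow, unit]
  | succ m ih => exact integrable_conv μ _ _ h1 ih

theorem coef_unit (μ : Measure E) [SigmaFinite μ] (n : ℕ) : coef μ (unit : CF E) n = if n = 0 then 1 else 0 := by
  unfold coef unit
  rcases n with _ | n
  · simp [Measure.real]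
  · simp

end CF

theorem cauchy_pow (a : ℕ → ℝ) (ha : Summable fun n => ‖a n‖) (p : ℕ → ℕ → ℝ)
    (h0 : ∀ n, p 0 n = if n = 0 then 1 else 0)
    (hs : ∀ m n, p (m + 1) n = ∑ kl ∈ Finset.HasAntidiagonal.antidiagonal n, a kl.1 * p m kl.2) (m : ℕ) :
    (Summable fun n => ‖p m n‖) ∧ ∑' n, p m n = (∑' n, a n) ^ m := by
  induction m with
  | zero =>
    simp_rw [h0]
    refine ⟨summable_of_ne_finset_zero (s := {0}) fun n hn => ?_, by simp⟩
    have : n ≠ 0 := by simpa using hn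
    simp [this]
  | succ m ih =>
    simp_rw [hs]
    refine ⟨summable_norm_sum_mul_antidiagonal_of_summable_norm ha ih.1, ?_⟩
    rw [← tsum_mul_tsum_eq_tsum_sum_antidiagonal_of_summable_norm ha ih.1, ih.2, pow_succ']

/-- abs version -/
noncomputable def absPow (a : ℕ → ℝ) : ℕ → ℕ → ℝ
  | 0 => fun n => if n = 0 then 1 else 0
  | m + 1 => fun n => ∑ kl ∈ Finset.HasAntidiagonal.antidiagonal n, |a kl.1| * absPow a m kl.2

theorem exp_series (a : ℕ → ℝ) (ha : Summable fun n => ‖a n‖) (p : ℕ → ℕ → ℝ)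
    (h0 : ∀ n, p 0 n = if n = 0 then 1 else 0)
    (hs : ∀ m n, p (m + 1) n = ∑ kl ∈ Finset.HasAntidiagonal.antidiagonal n, a kl.1 * p m kl.2)
    (hz : ∀ m n, n < m → p m n = 0) :
    (Summable fun n => |∑ m ∈ Finset.range (n + 1), ((m.factorial : ℝ))⁻¹ * p m n|) ∧
    ∑' n, ∑ m ∈ Finset.range (n + 1), ((m.factorial : ℝ))⁻¹ * p m n = Real.exp (∑' n, a n) := by
  have hq := cauchy_pow (fun n => |a n|) (by simpa using ha) (absPow a) (fun _ => rfl) (fun _ _ => rfl)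
  have hpq : ∀ m n, |p m n| ≤ absPow a m n := by
    intro m
    induction m with
    | zero => intro n; rw [h0]; simp only [absPow]; split_ifs <;> simp
    | succ m ih =>
      intro n
      rw [hs]
      refine (Finset.abs_sum_le_sum_abs _ _).trans (Finset.sum_le_sum fun kl _ => ?_)
      rw [abs_mul]
      exact mul_le_mul_of_nonneg_left (ih _) (abs_nonneg _)
  have hq0 : ∀ m n, 0 ≤ absPow a m n := fun m n => (abs_nonneg _).trans (hpq m n)
  have hexp : ∀ t : ℝ, HasSum (fun m : ℕ => ((m.factorial : ℝ))⁻¹ * t ^ m) (Real.exp t) := by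
    intro t
    rw [Real.exp_eq_exp_ℝ]
    simpa [div_eq_inv_mul] using NormedSpace.expSeries_div_hasSum_exp t
  have hQ : Summable (fun z : ℕ × ℕ => ((z.1.factorial : ℝ))⁻¹ * absPow a z.1 z.2) := by
    have hnn : (0 : ℕ × ℕ → ℝ) ≤ fun z : ℕ × ℕ => ((z.1.factorial : ℝ))⁻¹ * absPow a z.1 z.2 :=
      fun z => mul_nonneg (inv_nonneg.2 (Nat.cast_nonneg _)) (hq0 _ _)
    have hrow : ∀ m : ℕ, Summable fun n => ((m.factorial : ℝ))⁻¹ * absPow a m n := by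
      intro m
      have h := (hq m).1
      exact (Summable.of_norm h).mul_left _
    refine (summable_prod_of_nonneg hnn).2 ⟨hrow, ?_⟩
    have e : ∀ m : ℕ, ∑' n, ((m.factorial : ℝ))⁻¹ * absPow a m n =
        ((m.factorial : ℝ))⁻¹ * (∑' n, |a n|) ^ m := fun m => by
      rw [tsum_mul_left, (hq m).2]
    exact (hexp (∑' n, |a n|)).summable.congr fun m => (e m).symm
  have hP : Summable (fun z : ℕ × ℕ => ‖((z.1.factorial : ℝ))⁻¹ * p z.1 z.2‖) := by
    refine Summable.of_nonneg_of_le (fun _ => norm_nonneg _) (fun z => ?_) hQ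
    rw [norm_mul, Real.norm_of_nonneg (by positivity)]
    exact mul_le_mul_of_nonneg_left (hpq _ _) (by positivity)
  have hfin : ∀ n, ∑ m ∈ Finset.range (n + 1), ((m.factorial : ℝ))⁻¹ * p m n =
      ∑' m, ((m.factorial : ℝ))⁻¹ * p m n := by
    intro n
    refine (tsum_eq_sum fun m hm => ?_).symm
    rw [hz m n (by simpa using hm), mul_zero]
  simp_rw [hfin]
  constructor
  · have h1 := hP.prod_symm
    refine Summable.of_nonneg_of_le (fun _ => abs_nonneg _) (fun n => ?_) h1.prod
    exact norm_tsum_le_tsum_norm (h1.prod_factor n)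
  · rw [Summable.tsum_comm (f := fun m n => ((m.factorial : ℝ))⁻¹ * p m n) hP.of_norm]
    have e : ∀ m : ℕ, ∑' n, ((m.factorial : ℝ))⁻¹ * p m n =
        ((m.factorial : ℝ))⁻¹ * (∑' n, a n) ^ m := fun m => by
      rw [tsum_mul_left, (cauchy_pow a ha p h0 hs m).2]
    rw [tsum_congr e]
    exact (hexp _).tsum_eq

open CF MeasureTheory in
/-- eq. (2.15): finite-volume expansion of the two-point Janossy
density. -/
theorem twoPoint_janossy_expansion (d : ℕ) (hd : 1 ≤ d)
    (Λ : Set (Euc d)) (hΛbdd : Bornology.IsBounded Λ) (hΛmeas : MeasurableSet Λ)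
    (ρ : CF (Euc d)) (hρ0 : ρ 0 = 1) (hρsymm : IsSymm ρ)
    (hρmeas : ∀ n, Measurable (ρ n))
    (x₁ x₂ : Euc d) (h12 : ρ 2 ![x₁, x₂] ≠ 0)
    (F : CF (Euc d)) (hF0 : F 0 = 0) (hFsymm : IsSymm F)
    (hF : D2 x₁ x₂ ρ = ρ 2 ![x₁, x₂] • starExp F)
    (C c : ℝ) (hC : 0 < C) (hc0 : 0 < c) (hc : c < 1 / 2)
    (hbound : ∀ (k : ℕ) (y : Euc d),
      ∫⁻ z, ENNReal.ofReal |F (k + 1) (Fin.cons y z)| ∂(piRestrict d Λ k) ≤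
        ENNReal.ofReal (k.factorial * C * c ^ k)) :
    Summable (fun k : ℕ =>
      |(-1 : ℝ) ^ k / k.factorial * ∫ y, F k y ∂(piRestrict d Λ k)|) ∧
    Summable (fun k : ℕ =>
      |(-1 : ℝ) ^ k / k.factorial *
        ∫ y, ρ (k + 2) (Fin.cons x₁ (Fin.cons x₂ y)) ∂(piRestrict d Λ k)|) ∧
    ∑' k : ℕ, (-1 : ℝ) ^ k / k.factorial *
        ∫ y, ρ (k + 2) (Fin.cons x₁ (Fin.cons x₂ y)) ∂(piRestrict d Λ k) =
      ρ 2 ![x₁, x₂] *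
        Real.exp
          (∑' k : ℕ, (-1 : ℝ) ^ k / k.factorial *
            ∫ y, F k y ∂(piRestrict d Λ k)) := by
  set μ : Measure (Euc d) := volume.restrict Λ with hμ
  have hfin : IsFiniteMeasure μ := ⟨by
    rw [hμ, Measure.restrict_apply_univ]; exact hΛbdd.measure_lt_top⟩
  have hpi : ∀ n, piRestrict d Λ n = Measure.pi fun _ => μ := fun n => rfl
  -- rewriting of rho
  have hcons0 : (Fin.cons x₁ (Fin.cons x₂ Fin.elim0) : Fin 2 → Euc d) = ![x₁, x₂] := by
    funext i; fin_cases i <;> rfl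
  have hρF : ∀ (n : ℕ) (y : Fin n → Euc d), ρ (n + 2) (Fin.cons x₁ (Fin.cons x₂ y)) =
      ρ 2 ![x₁, x₂] * starExp F n y := by
    intro n y
    have h := congrFun (congrFun hF n) y
    simp only [D2, D, Pi.smul_apply, smul_eq_mul] at h
    rw [← h, ← hρsymm (n + 2) (Equiv.swap 0 1)]
    congr 1
    funext i
    refine Fin.cases ?_ (fun i => Fin.cases ?_ (fun i => ?_) i) i
    · rfl
    · rfl
    · rw [Function.comp_apply, Equiv.swap_apply_of_ne_of_ne]
      · rfl
      · exact Fin.succ_ne_zero _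
      · intro hh
        exact Fin.succ_ne_zero i (Fin.succ_injective _ hh)
  have hEm : ∀ n, Measurable (starExp F n) := by
    intro n
    have : starExp F n = fun y => (ρ 2 ![x₁, x₂])⁻¹ * ρ (n + 2) (Fin.cons x₁ (Fin.cons x₂ y)) := by
      funext y; rw [hρF]; field_simp
    rw [this]
    refine Measurable.const_mul ((hρmeas _).comp ?_) _
    refine measurable_pi_lambda _ fun i => ?_
    refine Fin.cases measurable_const (fun i => Fin.cases measurable_const (fun i => ?_) i) i
    exact measurable_pi_apply i
  have hFm := measurable_of_starExp F hF0 hEm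
  have hlint : ∀ k, ∫⁻ z, ‖F (k + 1) z‖ₑ ∂(Measure.pi fun _ => μ) ≤
      ENNReal.ofReal (k.factorial * C * c ^ k * μ.real Set.univ) := by
    intro k
    have mp := (measurePreserving_piFinSuccAbove (fun _ : Fin (k + 1) => μ) 0).symm
    rw [← mp.map_eq, lintegral_map ((hFm _).enorm) mp.measurable]
    refine (lintegral_prod_le _).trans ?_
    calc _ ≤ ∫⁻ y, ENNReal.ofReal (k.factorial * C * c ^ k) ∂μ := by
            refine lintegral_mono fun y => ?_
            refine le_trans (le_of_eq ?_) (hbound k y)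
            refine lintegral_congr fun z => ?_
            rw [← Real.norm_eq_abs, ofReal_norm]
            congr 2
            simp [MeasurableEquiv.piFinSuccAbove]
            rfl
      _ = _ := by
            rw [lintegral_const, ENNReal.ofReal_mul (p := k.factorial * C * c ^ k) (by positivity), Measure.real,
              ENNReal.ofReal_toReal (measure_ne_top _ _)]
  have hFint : ∀ k, Integrable (F k) (Measure.pi fun _ => μ) := by
    intro k
    refine ⟨(hFm k).aestronglyMeasurable, ?_⟩
    rcases k with _ | k
    · rw [hF0]; simp [HasFiniteIntegral]
    · exact (hlint k).trans_lt ENNReal.ofReal_lt_top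
  have hsum : Summable fun n => ‖coef μ F n‖ := by
    rw [← summable_nat_add_iff 1]
    refine Summable.of_nonneg_of_le (fun _ => norm_nonneg _) (fun k => ?_)
      ((summable_geometric_of_lt_one hc0.le (by linarith : c < 1)).mul_left (C * μ.real Set.univ))
    have h1 : ‖∫ z, F (k + 1) z ∂(Measure.pi fun _ => μ)‖ ≤ k.factorial * C * c ^ k * μ.real Set.univ := by
      have h2 := (enorm_integral_le_lintegral_enorm (μ := Measure.pi fun _ => μ) (F (k + 1))).trans (hlint k)
      rw [← ofReal_norm] at h2
      exact (ENNReal.ofReal_le_ofReal_iff (by positivity)).1 h2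
    unfold coef
    rw [norm_mul, norm_div, norm_pow, norm_neg, norm_one, one_pow, Real.norm_natCast, one_div,
      inv_mul_le_iff₀ (by positivity)]
    refine h1.trans ?_
    have h3 : (k.factorial : ℝ) ≤ (k + 1).factorial := by
      exact_mod_cast Nat.factorial_le (Nat.le_succ k)
    calc _ = (k.factorial : ℝ) * (C * μ.real Set.univ * c ^ k) := by ring
      _ ≤ _ := mul_le_mul_of_nonneg_right h3 (by positivity)
  have hmain := exp_series (coef μ F) hsum (fun m => coef μ (starPow F m))
    (fun n => coef_unit μ n)
    (fun m n => coef_conv μ _ _ hFint (integrable_starPow μ F hFint m) n)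
    (fun m n hmn => by simp [coef, starPow_eq_zero F hF0 m n hmn])
  have hcoef : ∀ k : ℕ, (-1 : ℝ) ^ k / k.factorial *
        ∫ y, ρ (k + 2) (Fin.cons x₁ (Fin.cons x₂ y)) ∂(piRestrict d Λ k) =
      ρ 2 ![x₁, x₂] * ∑ m ∈ Finset.range (k + 1), ((m.factorial : ℝ))⁻¹ * coef μ (starPow F m) k := by
    intro k
    simp_rw [hρF, hpi]
    rw [integral_const_mul]
    unfold starExp coef
    rw [integral_finsetSum _ fun m _ => (integrable_starPow μ F hFint m k).const_mul _]
    simp_rw [integral_const_mul, Finset.mul_sum]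
    refine Finset.sum_congr rfl fun m _ => ?_
    ring
  refine ⟨hsum, ?_, ?_⟩
  · simp_rw [hcoef, abs_mul]
    exact hmain.1.mul_left _
  · simp_rw [hcoef]
    rw [tsum_mul_left, hmain.2]
    rfl
end

section
/- (Lemma 3.3, splitting of the two-point expansion kernels.) Let ρ = (ρ^{(n)})_{n≥0} be a configuration functional over a type E with ρ^{(0)} = 1, and let ρ_T ∈ A₀ be the unique functional with ρ = exp∗ ρ_T. Let x₁, x₂ ∈ E and suppose ρ^{(1)}(x₁) ≠ 0, ρ^{(1)}(x₂) ≠ 0 and ρ^{(2)}(x₁,x₂) ≠ 0. Define: F ∈ A₀ by D_{x₁,x₂} ρ = ρ^{(2)}(x₁,x₂) · exp∗ F; for i = 1,2, ω_{x_i} ∈ A₀ by D_{x_i} ρ_T = ρ^{(1)}(x_i) · exp∗ ω_{x_i}; and ω_{(x₁,x₂)} ∈ A₀ as the unique functional satisfying D_{x₁,x₂} ρ_T / ρ^{(2)}(x₁,x₂) = ( exp∗ ω_{(x₁,x₂)} − (ρ^{(1)}(x₁)ρ^{(1)}(x₂)/ρ^{(2)}(x₁,x₂)) · 𝟙 ) ∗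 ( D_{x₁} ρ_T / ρ^{(1)}(x₁) ) ∗ ( D_{x₂} ρ_T / ρ^{(1)}(x₂) ). Then F = ρ_T + ω_{x₁} + ω_{x₂} + ω_{(x₁,x₂)}, i.e. for every k ≥ 1 and all y₁,…,y_k ∈ E: F^{(k)}(y₁,…,y_k) = ρ_T^{(k)}(y₁,…,y_k) + ω_{x₁}^{(k)}(y₁,…,y_k) + ω_{x₂}^{(k)}(y₁,…,y_k) + ω_{(x₁,x₂)}^{(k)}(y₁,…,y_k). -/
open MeasureTheory Finset

namespace CF

variable {E : Type}

lemma eval_sub (A : CF E) {n k : ℕ} (x : Fin n → E) (I : Finset (Fin n)) (f : Fin k → Fin n)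
    (hf : StrictMono f) (hI : Finset.univ.image f = I) : A I.card (sub x I) = A k (x ∘ f) := by
  have hk : I.card = k := by
    rw [← hI, Finset.card_image_of_injective _ hf.injective]; simp
  subst hk
  have : f = I.orderEmbOfFin rfl := by
    apply Finset.orderEmbOfFin_unique rfl _ hf
    intro i
    have : f i ∈ Finset.univ.image f := Finset.mem_image_of_mem _ (Finset.mem_univ i)
    rwa [hI] at this
  rw [this]
  rfl

lemma range_emb {n : ℕ} (J : Finset (Fin n)) :
    Finset.univ.image (J.orderEmbOfFin rfl) = J := by
  ext a
  have := Finset.range_orderEmbOfFin J rfl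
  have h2 : a ∈ Set.range (J.orderEmbOfFin rfl) ↔ a ∈ (J : Set (Fin n)) := by rw [this]
  simpa using h2

lemma eval_succ (A : CF E) {n : ℕ} (x : E) (y : Fin n → E) (J : Finset (Fin n)) :
    A (J.image Fin.succ).card (sub (Fin.cons x y : Fin (n+1) → E) (J.image Fin.succ))
      = A J.card (sub y J) := by
  rw [eval_sub A _ _ (Fin.succ ∘ J.orderEmbOfFin rfl)]
  · rfl
  · exact (Fin.strictMono_succ).comp (J.orderEmbOfFin rfl).strictMono
  · rw [← Finset.image_image, range_emb]

lemma eval_zero_succ (A : CF E) {n : ℕ} (x : E) (y : Fin n → E) (J : Finset (Fin n)) :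
    A (insert 0 (J.image Fin.succ)).card
      (sub (Fin.cons x y : Fin (n+1) → E) (insert 0 (J.image Fin.succ)))
      = D x A J.card (sub y J) := by
  rw [eval_sub A _ _ (Fin.cons 0 (Fin.succ ∘ J.orderEmbOfFin rfl) : Fin (J.card + 1) → Fin (n+1))]
  · unfold D
    congr 1
    funext i
    refine Fin.cases ?_ (fun i => ?_) i
    · rfl
    · rfl
  · intro i j
    refine Fin.cases ?_ (fun i => ?_) i <;> refine Fin.cases ?_ (fun j => ?_) j
    · simp
    · intro _; simp
    · intro h; exact absurd h (by simp)
    · intro h; simpa using h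
  · rw [Fin.univ_succ]
    ext a
    have hr := range_emb J
    constructor
    · intro h
      simp only [Finset.mem_image, Finset.mem_cons, Finset.mem_map, Finset.mem_univ] at h
      obtain ⟨b, hb, rfl⟩ := h
      rcases hb with rfl | ⟨c, -, rfl⟩
      · simp
      · simp
    · intro h
      rw [Finset.mem_insert] at h
      rcases h with rfl | h
      · simp
      · rw [← hr, Finset.image_image] at h
        obtain ⟨c, -, rfl⟩ := Finset.mem_image.1 h
        exact Finset.mem_image.2 ⟨c.succ, by simp, rfl⟩

lemma compl_succ {n : ℕ} (J : Finset (Fin n)) :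
    (J.image Fin.succ)ᶜ = insert 0 (Jᶜ.image Fin.succ) := by
  ext a
  refine Fin.cases ?_ (fun i => ?_) a <;> simp

lemma compl_zero_succ {n : ℕ} (J : Finset (Fin n)) :
    (insert 0 (J.image Fin.succ))ᶜ = Jᶜ.image Fin.succ := by
  rw [← compl_compl (Jᶜ.image Fin.succ), compl_succ, compl_compl]

lemma sum_finset_succ {n : ℕ} (f : Finset (Fin (n+1)) → ℝ) :
    ∑ I, f I = ∑ J : Finset (Fin n), f (insert 0 (J.image Fin.succ))
      + ∑ J : Finset (Fin n), f (J.image Fin.succ) := by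
  have hu : (Finset.univ : Finset (Finset (Fin (n+1))))
      = (insert 0 ((Finset.univ : Finset (Fin n)).image Fin.succ)).powerset := by
    rw [← Finset.powerset_univ]; congr 1
    ext a
    refine Fin.cases ?_ (fun i => ?_) a <;> simp
  have h0 : (0 : Fin (n+1)) ∉ (Finset.univ : Finset (Fin n)).image Fin.succ := by simp
  have hp : ((Finset.univ : Finset (Fin n)).image Fin.succ).powerset
      = (Finset.univ : Finset (Finset (Fin n))).image (fun J => J.image Fin.succ) := by
    ext I
    rw [Finset.mem_powerset, Finset.subset_image_iff]
    simp
  have hinj : Function.Injective (fun J : Finset (Fin n) => J.image Fin.succ) :=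
    Finset.image_injective (Fin.succ_injective n)
  rw [hu, Finset.sum_powerset_insert h0, hp, Finset.sum_image (fun a _ b _ h => hinj h),
    Finset.sum_image (fun a _ b _ h => hinj h), add_comm]

lemma D_conv (x : E) (A B : CF E) : D x (conv A B) = conv (D x A) B + conv A (D x B) := by
  funext n y
  change ∑ I : Finset (Fin (n+1)), _ = conv (D x A) B n y + conv A (D x B) n y
  rw [sum_finset_succ]
  unfold conv
  congr 1
  · refine Finset.sum_congr rfl fun J _ => ?_
    rw [compl_zero_succ, eval_succ B, eval_zero_succ A]
  · refine Finset.sum_congr rfl fun J _ => ?_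
    rw [compl_succ, eval_succ A, eval_zero_succ B]

lemma eval0 (A : CF E) {k : ℕ} (hk : k = 0) (z : Fin k → E) (z0 : Fin 0 → E) : A k z = A 0 z0 := by
  subst hk
  congr 1
  exact Subsingleton.elim _ _

lemma conv_zero (A B : CF E) (x : Fin 0 → E) : conv A B 0 x = A 0 x * B 0 x := by
  unfold conv
  rw [Fintype.sum_eq_single (∅ : Finset (Fin 0))]
  · rw [eval0 A (by simp) _ x, eval0 B (by simp) _ x]
  · intro I hI
    exact absurd (Subsingleton.elim _ _) hI

lemma succ_eval (A : CF E) {n : ℕ} (x : Fin (n+1) → E) : A (n+1) x = D (x 0) A n (Fin.tail x) := by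
  unfold D; rw [Fin.cons_self_tail]

lemma conv_congr (A B B' : CF E) (n : ℕ) (h : ∀ k ≤ n, B k = B' k) : conv A B n = conv A B' n := by
  funext x
  unfold conv
  refine Finset.sum_congr rfl fun I _ => ?_
  rw [h _ (by simpa using Finset.card_le_univ Iᶜ)]

lemma add_conv (A B C : CF E) : conv (A + B) C = conv A C + conv B C := by
  funext n x
  simp [conv, add_mul, Finset.sum_add_distrib]

lemma conv_add (A B C : CF E) : conv A (B + C) = conv A B + conv A C := by
  funext n x
  simp [conv, mul_add, Finset.sum_add_distrib]

lemma smul_conv (c : ℝ) (A B : CF E) : conv (c • A) B = c • conv A B := by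
  funext n x
  simp [conv, Finset.mul_sum, mul_assoc]

lemma conv_smul (c : ℝ) (A B : CF E) : conv A (c • B) = c • conv A B := by
  funext n x
  simp [conv, Finset.mul_sum, mul_left_comm]

lemma conv_comm (A B : CF E) : conv A B = conv B A := by
  funext n
  induction n generalizing A B with
  | zero => funext x; rw [conv_zero, conv_zero, mul_comm]
  | succ n ih =>
    funext x
    rw [succ_eval (conv A B), succ_eval (conv B A), D_conv, D_conv, Pi.add_apply, Pi.add_apply,
      Pi.add_apply, Pi.add_apply, ih, ih A, add_comm]

lemma conv_assoc (A B C : CF E) : conv (conv A B) C = conv A (conv B C) := by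
  funext n
  induction n generalizing A B C with
  | zero => funext x; simp only [conv_zero, mul_assoc]
  | succ n ih =>
    funext x
    rw [succ_eval (conv (conv A B) C), succ_eval (conv A _), D_conv, D_conv, D_conv, D_conv, add_conv, conv_add]
    simp only [Pi.add_apply, ih, add_assoc]

lemma D_unit (x : E) : D x unit = 0 := by
  funext n y; simp [D, unit]

lemma unit_conv (A : CF E) : conv unit A = A := by
  funext n
  induction n generalizing A with
  | zero => funext x; simp [conv_zero, unit]
  | succ n ih =>
    funext x
    have h0 : conv (0 : CF E) A = 0 := by funext n x; simp [conv]
    rw [succ_eval (conv unit A), succ_eval A, D_conv, D_unit, h0, zero_add, ih]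

lemma D_add (x : E) (A B : CF E) : D x (A + B) = D x A + D x B := rfl

lemma D_starPow (x : E) (Φ : CF E) (m : ℕ) :
    D x (starPow Φ (m+1)) = ((m : ℝ) + 1) • conv (D x Φ) (starPow Φ m) := by
  induction m with
  | zero =>
    simp only [starPow, D_conv, D_unit]
    have h0 : conv Φ (0 : CF E) = 0 := by funext n x; simp [conv]
    simp [h0]
  | succ m ih =>
    rw [starPow, D_conv, ih, conv_smul, ← conv_assoc, conv_comm Φ, conv_assoc]
    rw [show conv Φ (starPow Φ m) = starPow Φ (m+1) from rfl]
    push_cast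
    rw [add_smul ((m:ℝ)+1), one_smul, add_comm]

lemma starPow_vanish (Φ : CF E) (h : Φ 0 = 0) (n : ℕ) : ∀ m, n < m → starPow Φ m n = 0 := by
  induction n using Nat.strong_induction_on with
  | _ n ih =>
    intro m hm
    obtain ⟨m, rfl⟩ : ∃ k, m = k + 1 := ⟨m - 1, by omega⟩
    funext x
    cases n with
    | zero => rw [starPow, conv_zero, h]; simp
    | succ n =>
      rw [succ_eval (starPow Φ _), D_starPow, Pi.smul_apply, conv_congr _ _ 0 n]
      · simp [conv]
      · intro k hk
        exact ih k (by omega) m (by omega)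

lemma starExp_eval (Φ : CF E) (h : Φ 0 = 0) (N n : ℕ) (hn : n ≤ N) :
    starExp Φ n = (∑ m ∈ Finset.range (N+1), ((m.factorial : ℝ))⁻¹ • starPow Φ m) n := by
  funext x
  rw [Finset.sum_apply, Finset.sum_apply]
  unfold starExp
  refine Finset.sum_subset (Finset.range_mono (by omega)) fun m _ hm => ?_
  rw [starPow_vanish Φ h n m (by simpa using hm)]
  simp

lemma conv_sum (A : CF E) (s : Finset ℕ) (f : ℕ → CF E) :
    conv A (∑ m ∈ s, f m) = ∑ m ∈ s, conv A (f m) := by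
  induction s using Finset.induction_on with
  | empty => funext n x; simp [conv]
  | insert a s ha ih => rw [Finset.sum_insert ha, Finset.sum_insert ha, conv_add, ih]

lemma D_starExp (x : E) (Φ : CF E) (h : Φ 0 = 0) : D x (starExp Φ) = conv (D x Φ) (starExp Φ) := by
  funext n y
  rw [conv_congr _ _ _ n (fun k hk => starExp_eval Φ h n k hk), conv_sum, Finset.sum_apply,
    Finset.sum_apply]
  change ∑ m ∈ Finset.range (n + 1 + 1), ((m.factorial : ℝ))⁻¹ * D x (starPow Φ m) n y = _
  rw [Finset.sum_range_succ']
  have h0 : D x (starPow Φ 0) = 0 := D_unit x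
  rw [h0]
  simp only [Pi.zero_apply, mul_zero, add_zero]
  refine Finset.sum_congr rfl fun m _ => ?_
  rw [D_starPow, conv_smul]
  simp only [Pi.smul_apply, smul_eq_mul, Nat.factorial_succ]
  push_cast
  have : (m : ℝ) + 1 ≠ 0 := by positivity
  field_simp

lemma ode_unique (K : E → CF E) (G H : CF E) (h0 : G 0 = H 0) (hG : ∀ x, D x G = conv (K x) G)
    (hH : ∀ x, D x H = conv (K x) H) : G = H := by
  funext n
  induction n using Nat.strong_induction_on with
  | _ n ih =>
    cases n with
    | zero => exact h0
    | succ n =>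
      funext x
      rw [succ_eval G, succ_eval H, hG, hH, conv_congr _ _ _ n (fun k hk => ih k (by omega))]

lemma starExp_zero_apply (Φ : CF E) : starExp Φ 0 = 1 := by
  funext x; simp [starExp, starPow, unit]

lemma starExp_add (A B : CF E) (hA : A 0 = 0) (hB : B 0 = 0) :
    starExp (A + B) = conv (starExp A) (starExp B) := by
  refine ode_unique (fun x => D x (A + B)) _ _ ?_ ?_ ?_
  · funext x; rw [conv_zero]; simp [starExp_zero_apply]
  · intro x; exact D_starExp x _ (by simp [hA, hB])
  · intro x
    rw [D_conv, D_starExp _ _ hA, D_starExp _ _ hB, D_add, add_conv, conv_assoc,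
      ← conv_assoc (starExp A), conv_comm (starExp A) (D x B), conv_assoc]

lemma starExp_zero : starExp (0 : CF E) = unit := by
  refine ode_unique (fun _ => 0) _ _ ?_ ?_ ?_
  · rw [starExp_zero_apply]; funext x; simp [unit]
  · intro x; exact D_starExp x _ rfl
  · intro x; rw [D_unit]; funext n y; simp [conv]

lemma starExp_inj (A B : CF E) (hA : A 0 = 0) (hB : B 0 = 0) (h : starExp A = starExp B) :
    A = B := by
  have hinv : conv (starExp A) (starExp (-A)) = unit := by
    rw [← starExp_add _ _ hA (by simp [hA]), add_neg_cancel, starExp_zero]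
  have hD : ∀ x, D x A = D x B := by
    intro x
    have h1 : conv (D x A) (starExp A) = conv (D x B) (starExp A) := by
      rw [← D_starExp x A hA, h, ← D_starExp x B hB]
    have h2 := congrArg (fun Z => conv Z (starExp (-A))) h1
    simp only [conv_assoc, hinv] at h2
    rwa [conv_comm, unit_conv, conv_comm, unit_conv] at h2
  funext n
  cases n with
  | zero => rw [hA, hB]
  | succ n => funext x; rw [succ_eval A, succ_eval B, hD]

lemma D_smul (x : E) (c : ℝ) (A : CF E) : D x (c • A) = c • D x A := rfl

end CF

open CF in
/-- Lemma 3.3: splitting of the two-point expansion kernels,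
`F = ρ_T + ω_{x₁} + ω_{x₂} + ω_{(x₁,x₂)}`. -/
theorem twoPoint_kernel_splitting (E : Type) (ρ ρT F ω₁ ω₂ ω₁₂ : CF E) (x₁ x₂ : E)
    (hρ0 : ρ 0 = 1) (hρsymm : IsSymm ρ)
    (hρT0 : ρT 0 = 0) (hρTsymm : IsSymm ρT) (hρTexp : starExp ρT = ρ)
    (h1 : ρ 1 ![x₁] ≠ 0) (h2 : ρ 1 ![x₂] ≠ 0) (h12 : ρ 2 ![x₁, x₂] ≠ 0)
    (hF0 : F 0 = 0) (hFsymm : IsSymm F)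
    (hF : D2 x₁ x₂ ρ = ρ 2 ![x₁, x₂] • starExp F)
    (hω₁0 : ω₁ 0 = 0) (hω₁symm : IsSymm ω₁)
    (hω₁ : D x₁ ρT = ρ 1 ![x₁] • starExp ω₁)
    (hω₂0 : ω₂ 0 = 0) (hω₂symm : IsSymm ω₂)
    (hω₂ : D x₂ ρT = ρ 1 ![x₂] • starExp ω₂)
    (hω₁₂0 : ω₁₂ 0 = 0) (hω₁₂symm : IsSymm ω₁₂)
    (hω₁₂ : (ρ 2 ![x₁, x₂])⁻¹ • D2 x₁ x₂ ρT =
      conv (conv (starExp ω₁₂ - ((ρ 1 ![x₁] * ρ 1 ![x₂]) / ρ 2 ![x₁, x₂]) • unit)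
          ((ρ 1 ![x₁])⁻¹ • D x₁ ρT))
        ((ρ 1 ![x₂])⁻¹ • D x₂ ρT)) :
    F = ρT + ω₁ + ω₂ + ω₁₂ := by
  subst hρTexp
  set r := starExp ρT 2 ![x₁, x₂] with hr
  set r₁ := starExp ρT 1 ![x₁] with hr₁
  set r₂ := starExp ρT 1 ![x₂] with hr₂
  refine starExp_inj _ _ hF0 (by simp [hρT0, hω₁0, hω₂0, hω₁₂0]) ?_
  rw [starExp_add _ _ (by simp [hρT0, hω₁0, hω₂0]) hω₁₂0,
    starExp_add _ _ (by simp [hρT0, hω₁0]) hω₂0, starExp_add _ _ hρT0 hω₁0]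
  have e1 : D2 x₁ x₂ (starExp ρT) = conv (D2 x₁ x₂ ρT) (starExp ρT)
      + conv (D x₂ ρT) (conv (D x₁ ρT) (starExp ρT)) := by
    unfold D2
    rw [D_starExp _ _ hρT0, D_conv, D_starExp _ _ hρT0]
  have e2 : D2 x₁ x₂ ρT = r • (conv (conv (starExp ω₁₂) (starExp ω₁)) (starExp ω₂))
      - (r₁ * r₂) • conv (starExp ω₁) (starExp ω₂) := by
    have := congrArg (fun Z => r • Z) hω₁₂
    simp only [smul_inv_smul₀ h12] at this
    rw [this, hω₁, hω₂, inv_smul_smul₀ h1, inv_smul_smul₀ h2, sub_eq_add_neg, ← neg_smul,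
      add_conv, add_conv, smul_conv, smul_conv, unit_conv, smul_add, smul_smul, sub_eq_add_neg,
      ← neg_smul]
    congr 2
    field_simp
  rw [hF, hω₁, hω₂, e2, sub_eq_add_neg, ← neg_smul, add_conv] at e1
  simp only [smul_conv, conv_smul, smul_smul] at e1
  rw [← conv_assoc (starExp ω₂), conv_comm (starExp ω₂), add_assoc, ← add_smul,
    neg_add_cancel, zero_smul, add_zero] at e1
  have e3 := smul_right_injective _ h12 e1
  rw [e3, conv_comm _ (starExp ρT), conv_comm _ (starExp ω₁₂), conv_assoc (starExp ω₁₂)]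
  simp only [← conv_assoc]
  rw [conv_comm (starExp ρT) (starExp ω₁₂)]
end
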